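/- arXiv:2502.09453 — 3 statements merged into one kernel-verified Lean document; each statement's English description precedes it below -/
import Mathlib

section
/- Let G = (V,E) be a finite simple graph with at least one vertex, let V_max be the set of vertices of maximum degree Δ(G), and partition V_max into equivalence classes V_1,…,V_m under the relation x ≡ y iff N_G(x) = N_G(y). For i = 1,…,m let N_i denote the common closed neighborhood of the vertices in V_i and set V'_i = N_i \ V_i. Then VCD(C_star(G)) = Δ(G) + 1 if and only if there exist an index i ∈ {1,…,m} and a vertex v ∉ N_i such that V'_i ⊆ N_G(v). -/
open scoped Classical

noncomputable section

/-! ### Concept classes, VC-dimension, teaching dimension, RTD -/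

variable {X : Type*}

/-- A set `S` is shattered by the concept class `𝒞` if every subset of `S`
is the trace on `S` of some concept in `𝒞`. -/
def Shatters [DecidableEq X] (𝒞 : Finset (Finset X)) (S : Finset X) : Prop :=
  ∀ S' ⊆ S, ∃ C ∈ 𝒞, C ∩ S = S'

/-- The VC-dimension of a concept class: the maximum size of a shattered set. -/
def VCD [DecidableEq X] (𝒞 : Finset (Finset X)) : ℕ :=
  sSup {n | ∃ S : Finset X, Shatters 𝒞 S ∧ S.card = n}

/-- `D` is a teaching set for the concept `C` within the class `𝒞`:
no other concept of `𝒞` agrees with `C` on all of `D`. -/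
def IsTeachingSet [DecidableEq X] (𝒞 : Finset (Finset X)) (C D : Finset X) : Prop :=
  ∀ C' ∈ 𝒞, C' ≠ C → ∃ x ∈ D, ¬ ((x ∈ C') ↔ (x ∈ C))

/-- The teaching dimension of the concept `C` within the class `𝒞`:
the minimum size of a teaching set for `C` in `𝒞`. -/
def TD [DecidableEq X] (𝒞 : Finset (Finset X)) (C : Finset X) : ℕ :=
  sInf {n | ∃ D : Finset X, IsTeachingSet 𝒞 C D ∧ D.card = n}

/-- The minimum teaching dimension over all concepts of the class. -/
def TDmin [DecidableEq X] (𝒞 : Finset (Finset X)) : ℕ :=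
  sInf {n | ∃ C ∈ 𝒞, TD 𝒞 C = n}

/-- The recursive teaching dimension: with `𝒞_min` the set of concepts of `𝒞` whose
teaching dimension equals `TDmin 𝒞`, we have `RTD 𝒞 = TDmin 𝒞` if `𝒞 = 𝒞_min`
and `RTD 𝒞 = max (TDmin 𝒞) (RTD (𝒞 \ 𝒞_min))` otherwise. -/
def RTD [DecidableEq X] (𝒞 : Finset (Finset X)) : ℕ :=
  if h : 𝒞 = 𝒞.filter (fun C => TD 𝒞 C = TDmin 𝒞) then TDmin 𝒞
  else max (TDmin 𝒞) (RTD (𝒞 \ 𝒞.filter (fun C => TD 𝒞 C = TDmin 𝒞)))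
termination_by 𝒞.card
decreasing_by
  have hne : 𝒞.Nonempty := by
    rcases Finset.eq_empty_or_nonempty 𝒞 with he | hne
    · exact absurd (by simp [he]) h
    · exact hne
  obtain ⟨C₀, hC₀⟩ := hne
  have hmem : TDmin 𝒞 ∈ {n | ∃ C ∈ 𝒞, TD 𝒞 C = n} :=
    Nat.sInf_mem ⟨TD 𝒞 C₀, C₀, hC₀, rfl⟩
  obtain ⟨C, hC, hTD⟩ := hmem
  refine Finset.card_lt_card ?_
  refine (Finset.ssubset_iff_of_subset Finset.sdiff_subset).mpr ?_
  exact ⟨C, hC, by simp [Finset.mem_sdiff, Finset.mem_filter, hC, hTD]⟩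

/-! ### Graph-theoretic notions -/

/-- The degree of a vertex in a graph on a finite vertex type. -/
def deg {W : Type*} [Fintype W] (T : SimpleGraph W) (v : W) : ℕ :=
  (Finset.univ.filter (fun w => T.Adj v w)).card

/-- A leaf of a graph (in particular, of a tree) is a vertex of degree 1. -/
def IsLeaf {W : Type*} [Fintype W] (T : SimpleGraph W) (v : W) : Prop :=
  deg T v = 1

/-- The number of leaves of a graph (in particular, of a tree). -/
def leafCount {W : Type*} [Fintype W] (T : SimpleGraph W) : ℕ :=
  (Finset.univ.filter (fun v => IsLeaf T v)).card

variable {V : Type*} [Fintype V] [DecidableEq V]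

/-- The open neighborhood of a vertex, as a finset. -/
def nbrFinset (G : SimpleGraph V) (x : V) : Finset V :=
  Finset.univ.filter (fun y => G.Adj x y)

/-- The closed neighborhood of a vertex, as a finset. -/
def closedNbr (G : SimpleGraph V) (x : V) : Finset V :=
  insert x (nbrFinset G x)

/-- The maximum degree `Δ(G)`. -/
def maxDeg (G : SimpleGraph V) : ℕ :=
  Finset.univ.sup (deg G)

/-- The closed neighborhood of a set of vertices. -/
def closedNbrSet (G : SimpleGraph V) (A : Finset V) : Finset V :=
  A.biUnion (closedNbr G)

/-- The open neighborhood of a set of vertices: `N_G(A) \ A`. -/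
def openNbrSet (G : SimpleGraph V) (A : Finset V) : Finset V :=
  closedNbrSet G A \ A

/-- The star class of `G`: all sets `{x} ∪ X` with `X` a set of neighbors of `x`. -/
def Cstar (G : SimpleGraph V) : Finset (Finset V) :=
  Finset.univ.filter (fun C => ∃ x : V, ∃ Y ⊆ nbrFinset G x, C = insert x Y)

/-- `A` is a connected set of `G`: the induced subgraph `G[A]` is connected. -/
def IsConnSet (G : SimpleGraph V) (A : Finset V) : Prop :=
  (G.induce (A : Set V)).Connected

/-- The class of connected sets of `G` (including the empty set). -/
def Ccon (G : SimpleGraph V) : Finset (Finset V) :=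
  Finset.univ.filter (fun A => A = ∅ ∨ IsConnSet G A)

/-- For connected `G`: the maximum number of leaves over all spanning trees of `G`. -/
def ell (G : SimpleGraph V) : ℕ :=
  sSup {k | ∃ T : SimpleGraph V, T ≤ G ∧ T.IsTree ∧ leafCount T = k}

/-- For a general graph `G`: the maximum of `ell` over the connected components of `G`. -/
def ellGen (G : SimpleGraph V) : ℕ :=
  sSup {k | ∃ c : G.ConnectedComponent, ell (G.induce c.supp) = k}

/-- Every pair of distinct elements of `L` can be connected by a path in `G` which
contains neither `u` nor any element of `L` other than the two endpoints. -/
def ConnectableAvoiding (G : SimpleGraph V) (L : Set V) (u : V) : Prop :=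
  ∀ a ∈ L, ∀ b ∈ L, a ≠ b → ∃ p : G.Walk a b, p.IsPath ∧
    ∀ v ∈ p.support, v ≠ u ∧ (v ∈ L → v = a ∨ v = b)

end

/-!
Let `D ⊆ S` consist of the vertices of `S` whose closed neighborhood contains `S`. A subset of `S`
meeting `D` is itself a star. Hence `S` is shattered as soon as the subsets of `S \ D` are traces of
stars, which a center outside `S` adjacent to all of `S \ D` achieves. Conversely, a star with trace
`S \ D` on `S` cannot be centered at a point of `S`: the closed neighborhood of that center would
contain `S \ D` and, by symmetry of adjacency, also `D`, putting the center in `D`.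

A shattered set lies in a closed neighborhood, so one of size `Δ(G) + 1` is the closed neighborhood
`N` of a vertex of maximum degree, and then `D` is the set of vertices with closed neighborhood `N`.
-/

theorem VCD_eq_iff_exists_shatters {X : Type*} [DecidableEq X] {𝒞 : Finset (Finset X)} {n : ℕ}
    (hn : n ≠ 0) (hle : ∀ S, Shatters 𝒞 S → S.card ≤ n) :
    VCD 𝒞 = n ↔ ∃ S, Shatters 𝒞 S ∧ S.card = n := by
  have upper_bound : n ∈ upperBounds {k | ∃ S, Shatters 𝒞 S ∧ S.card = k} := by
    rintro _ ⟨S, hS, rfl⟩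
    exact hle S hS
  refine ⟨fun hVCD => ?_, fun hmem => IsGreatest.csSup_eq ⟨hmem, upper_bound⟩⟩
  have nonempty : {k | ∃ S, Shatters 𝒞 S ∧ S.card = k}.Nonempty := by
    by_contra hempty
    refine hn (hVCD.symm.trans ?_)
    rw [VCD, Set.not_nonempty_iff_eq_empty.mp hempty, csSup_empty, Nat.bot_eq_zero]
  exact hVCD ▸ Nat.sSup_mem nonempty ⟨n, upper_bound⟩

section

variable {V : Type*} [Fintype V] {G : SimpleGraph V} {S : Finset V} {x y : V}

theorem deg_le_maxDeg (G : SimpleGraph V) (x : V) : deg G x ≤ maxDeg G :=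
  Finset.le_sup (f := deg G) (Finset.mem_univ x)

variable [DecidableEq V]

theorem mem_closedNbr : y ∈ closedNbr G x ↔ y = x ∨ G.Adj x y := by
  simp [closedNbr, nbrFinset]

theorem mem_closedNbr_comm : y ∈ closedNbr G x ↔ x ∈ closedNbr G y := by
  rw [mem_closedNbr, mem_closedNbr, G.adj_comm, eq_comm]

theorem card_closedNbr (G : SimpleGraph V) (x : V) : (closedNbr G x).card = deg G x + 1 :=
  Finset.card_insert_of_notMem (by simp [nbrFinset])

theorem card_closedNbr_le (G : SimpleGraph V) (x : V) : (closedNbr G x).card ≤ maxDeg G + 1 :=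
  (card_closedNbr G x).trans_le (Nat.succ_le_succ (deg_le_maxDeg G x))

theorem deg_eq_maxDeg_and_closedNbr_eq_of_subset (hsub : S ⊆ closedNbr G x)
    (hcard : S.card = maxDeg G + 1) : deg G x = maxDeg G ∧ closedNbr G x = S := by
  have hS : S = closedNbr G x :=
    Finset.eq_of_subset_of_card_le hsub (hcard ▸ card_closedNbr_le G x)
  rw [hS, card_closedNbr] at hcard
  exact ⟨Nat.succ_injective hcard, hS.symm⟩

theorem closedNbr_subset_closedNbr_iff_of_deg_eq_maxDeg (hx : deg G x = maxDeg G) :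
    closedNbr G x ⊆ closedNbr G y ↔ deg G y = maxDeg G ∧ closedNbr G y = closedNbr G x :=
  ⟨fun hsub => deg_eq_maxDeg_and_closedNbr_eq_of_subset hsub (by rw [card_closedNbr, hx]),
    fun hy => hy.2.ge⟩

theorem mem_Cstar : S ∈ Cstar G ↔ ∃ x ∈ S, S ⊆ closedNbr G x := by
  simp only [Cstar, closedNbr, Finset.mem_filter, Finset.mem_univ, true_and]
  constructor
  · rintro ⟨x, Y, hY, rfl⟩
    exact ⟨x, Finset.mem_insert_self x Y, Finset.insert_subset_insert x hY⟩
  · rintro ⟨x, hxS, hS⟩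
    exact ⟨x, S.erase x, Finset.subset_insert_iff.mp hS, (Finset.insert_erase hxS).symm⟩

theorem exists_subset_closedNbr_of_shatters (hS : Shatters (Cstar G) S) :
    ∃ x, S ⊆ closedNbr G x := by
  obtain ⟨C, hC, hCS⟩ := hS S subset_rfl
  obtain ⟨x, -, hCx⟩ := mem_Cstar.mp hC
  exact ⟨x, (Finset.inter_eq_right.mp hCS).trans hCx⟩

theorem card_le_maxDeg_add_one_of_shatters (hS : Shatters (Cstar G) S) :
    S.card ≤ maxDeg G + 1 := by
  obtain ⟨x, hSx⟩ := exists_subset_closedNbr_of_shatters hS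
  exact (Finset.card_le_card hSx).trans (card_closedNbr_le G x)

theorem VCD_Cstar_eq_maxDeg_add_one_iff :
    VCD (Cstar G) = maxDeg G + 1 ↔
      ∃ x, deg G x = maxDeg G ∧ Shatters (Cstar G) (closedNbr G x) := by
  rw [VCD_eq_iff_exists_shatters (Nat.succ_ne_zero _)
    fun S => card_le_maxDeg_add_one_of_shatters]
  constructor
  · rintro ⟨S, hS, hcard⟩
    obtain ⟨x, hSx⟩ := exists_subset_closedNbr_of_shatters hS
    obtain ⟨hx, rfl⟩ := deg_eq_maxDeg_and_closedNbr_eq_of_subset hSx hcard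
    exact ⟨x, hx, hS⟩
  · rintro ⟨x, hx, hS⟩
    exact ⟨closedNbr G x, hS, by rw [card_closedNbr, hx]⟩

/-- The vertices whose closed neighborhood contains `S`, so that every subset of `S` containing one
of them is a star centered there. They are not required to lie in `S`. -/
noncomputable def commonCenters (G : SimpleGraph V) (S : Finset V) : Finset V :=
  Finset.univ.filter fun y => S ⊆ closedNbr G y

theorem mem_commonCenters : y ∈ commonCenters G S ↔ S ⊆ closedNbr G y := by
  simp [commonCenters]

theorem commonCenters_closedNbr_of_deg_eq_maxDeg (hx : deg G x = maxDeg G) :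
    commonCenters G (closedNbr G x) =
      Finset.univ.filter fun y => deg G y = maxDeg G ∧ closedNbr G y = closedNbr G x :=
  Finset.filter_congr fun _ _ => closedNbr_subset_closedNbr_iff_of_deg_eq_maxDeg hx

theorem shatters_Cstar_of_sdiff_commonCenters_subset {v : V} (hv : v ∉ S)
    (hcover : S \ commonCenters G S ⊆ closedNbr G v) : Shatters (Cstar G) S := by
  intro T hTS
  by_cases hT : ∃ y ∈ T, S ⊆ closedNbr G y
  · obtain ⟨y, hyT, hSy⟩ := hT
    exact ⟨T, mem_Cstar.mpr ⟨y, hyT, hTS.trans hSy⟩, Finset.inter_eq_left.mpr hTS⟩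
  · have hTv : T ⊆ closedNbr G v := fun y hyT =>
      hcover (Finset.mem_sdiff.mpr ⟨hTS hyT, fun hy => hT ⟨y, hyT, mem_commonCenters.mp hy⟩⟩)
    have hstar : insert v T ∈ Cstar G :=
      mem_Cstar.mpr ⟨v, Finset.mem_insert_self v T,
        Finset.insert_subset (Finset.mem_insert_self v _) hTv⟩
    exact ⟨insert v T, hstar,
      (Finset.insert_inter_of_notMem hv).trans (Finset.inter_eq_left.mpr hTS)⟩

theorem subset_closedNbr_of_sdiff_commonCenters_subset (hx : x ∈ S)
    (hcover : S \ commonCenters G S ⊆ closedNbr G x) : S ⊆ closedNbr G x := by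
  intro y hyS
  by_cases hy : y ∈ commonCenters G S
  · exact mem_closedNbr_comm.mp (mem_commonCenters.mp hy hx)
  · exact hcover (Finset.mem_sdiff.mpr ⟨hyS, hy⟩)

theorem shatters_Cstar_iff :
    Shatters (Cstar G) S ↔ ∃ v ∉ S, S \ commonCenters G S ⊆ closedNbr G v := by
  refine ⟨fun hS => ?_,
    fun ⟨v, hv, hcover⟩ => shatters_Cstar_of_sdiff_commonCenters_subset hv hcover⟩
  obtain ⟨C, hC, htrace⟩ := hS (S \ commonCenters G S) Finset.sdiff_subset
  obtain ⟨v, hvC, hCv⟩ := mem_Cstar.mp hC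
  have hcover : S \ commonCenters G S ⊆ closedNbr G v :=
    htrace ▸ Finset.inter_subset_left.trans hCv
  refine ⟨v, fun hvS => ?_, hcover⟩
  have hv : v ∈ S \ commonCenters G S := htrace ▸ Finset.mem_inter.mpr ⟨hvC, hvS⟩
  have hSv : S ⊆ closedNbr G v := subset_closedNbr_of_sdiff_commonCenters_subset hvS hcover
  exact (Finset.mem_sdiff.mp hv).2 (mem_commonCenters.mpr hSv)

end

/-- `VCD(C_star(G)) = Δ(G) + 1` iff there is a vertex `x` of maximum
degree (a representative of one of the equivalence classes `V_1, …, V_m` of vertices of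
maximum degree under equality of closed neighborhoods, so that `N_i = N_G(x)` and
`V_i = {y of max degree | N_G(y) = N_G(x)}` and `V'_i = N_i \ V_i`) and a vertex
`v ∉ N_i` with `V'_i ⊆ N_G(v)`. -/
theorem star_vcd_exact {V : Type*} [Fintype V] [DecidableEq V] [Nonempty V]
    (G : SimpleGraph V) :
    VCD (Cstar G) = maxDeg G + 1 ↔
      ∃ x : V, deg G x = maxDeg G ∧ ∃ v : V, v ∉ closedNbr G x ∧
        closedNbr G x \
            (Finset.univ.filter (fun y => deg G y = maxDeg G ∧ closedNbr G y = closedNbr G x))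
          ⊆ closedNbr G v := by
  rw [VCD_Cstar_eq_maxDeg_add_one_iff]
  refine exists_congr fun x => and_congr_right fun hx => ?_
  rw [shatters_Cstar_iff, commonCenters_closedNbr_of_deg_eq_maxDeg hx]
end

section
/- For every finite simple graph G each of whose connected components has at least two vertices, ℓ(G) ≤ VCD(C_con(G)) ≤ ℓ(G) + 1. -/
open scoped Classical

/-!
Deleting leaves from a connected graph keeps it connected, so the leaf set of a spanning tree is
shattered by the connected sets; this is the lower bound.

For the upper bound, a nonempty set shattered by the connected sets lies in one component, so let
`G` be connected and fix `u` in a shattered set `S`. A maximal connected set `D` containing `u` and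
avoiding `S \ {u}` has all of `S \ {u}` among its neighbors: a connected set meeting `S` in `{u, b}`
leaves `D`, and by maximality it can do so only through `b`. Now enlarge `D` without losing
neighbors: as long as some vertex is not in `D` or next to it, there are a neighbor `x` of `D` and a
vertex `y` adjacent to `x` but at distance two from `D`, and moving `x` into `D` trades `x` for `y`.
Finally `D` dominates `G`, and hanging each vertex outside `D` onto a single neighbor in `D` gives a
spanning tree with at least `|S| - 1` leaves.
-/

section VCDim

variable {X : Type*} [DecidableEq X] {𝒞 : Finset (Finset X)}

lemma Shatters.card_le_VCD {S : Finset X} (hS : Shatters 𝒞 S) : S.card ≤ VCD 𝒞 := by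
  refine le_csSup ⟨𝒞.sup Finset.card, ?_⟩ ⟨S, hS, rfl⟩
  rintro _ ⟨S', hS', rfl⟩
  obtain ⟨C, hC, hCS'⟩ := hS' S' subset_rfl
  exact (Finset.card_le_card (Finset.inter_eq_right.1 hCS')).trans (Finset.le_sup hC)

lemma VCD_le {n : ℕ} (h : ∀ S, Shatters 𝒞 S → S.card ≤ n) : VCD 𝒞 ≤ n := by
  refine csSup_le' ?_
  rintro _ ⟨S, hS, rfl⟩
  exact h S hS

end VCDim

section Leaves

variable {V : Type*} [Fintype V] {G T : SimpleGraph V}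

lemma isLeaf_iff_existsUnique_adj {v : V} : IsLeaf T v ↔ ∃! w, T.Adj v w := by
  simp [IsLeaf, deg, Finset.card_eq_one, Finset.eq_singleton_iff_unique_mem, ExistsUnique]

lemma leafCount_le_ell (hTG : T ≤ G) (hT : T.IsTree) : leafCount T ≤ ell G := by
  refine le_csSup ⟨Fintype.card V, ?_⟩ ⟨T, hTG, hT, rfl⟩
  rintro _ ⟨T', -, -, rfl⟩
  exact Finset.card_le_univ _

lemma ell_induce_supp_le_ellGen [DecidableEq V] (c : G.ConnectedComponent) :
    ell (G.induce c.supp) ≤ ellGen G :=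
  le_csSup (Set.finite_range fun c : G.ConnectedComponent ↦ ell (G.induce c.supp)).bddAbove ⟨c, rfl⟩

end Leaves

section ConnectedSets

variable {V W : Type*} {G : SimpleGraph V} {C : Finset V}

lemma isConnSet_singleton (v : V) : IsConnSet G {v} := by
  rw [IsConnSet, Finset.coe_singleton]
  exact ⟨.of_subsingleton⟩

lemma IsConnSet.insert_of_adj [DecidableEq V] (hC : IsConnSet G C) {x y : V} (hx : x ∈ C)
    (hxy : G.Adj x y) : IsConnSet G (insert y C) := by
  have hunion : (insert y C : Finset V) = (C ∪ {x, y} : Set V) := by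
    grind
  rw [IsConnSet, hunion]
  exact SimpleGraph.induce_union_connected hC.preconnected
    (SimpleGraph.induce_pair_connected_of_adj hxy).preconnected ⟨x, by simpa using hx⟩

lemma exists_adj_mem_notMem_of_preconnected (hG : G.Preconnected) {D : Set V} {a b : V} (ha : a ∈ D)
    (hb : b ∉ D) : ∃ x ∈ D, ∃ y ∉ D, G.Adj x y := by
  obtain ⟨p⟩ := hG a b
  obtain ⟨d, -, hfst, hsnd⟩ := p.exists_boundary_dart D ha hb
  exact ⟨d.fst, hfst, d.snd, hsnd, d.adj⟩

lemma IsConnSet.exists_adj_of_mem_of_notMem (hC : IsConnSet G C) {D : Set V} {a b : V}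
    (haC : a ∈ C) (haD : a ∈ D) (hbC : b ∈ C) (hbD : b ∉ D) :
    ∃ x ∈ D, ∃ y ∈ C, y ∉ D ∧ G.Adj x y := by
  obtain ⟨x, hx, y, hy, hxy⟩ := exists_adj_mem_notMem_of_preconnected hC.preconnected
    (D := Subtype.val ⁻¹' D) (a := ⟨a, haC⟩) (b := ⟨b, hbC⟩) haD hbD
  exact ⟨x, hx, y, y.2, hy, hxy⟩

lemma IsConnSet.subset_supp (hC : IsConnSet G C) {c : G.ConnectedComponent} {v : V}
    (hvC : v ∈ C) (hvc : v ∈ c.supp) : (C : Set V) ⊆ c.supp := by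
  intro w hw
  have hreach : G.Reachable w v :=
    (hC.preconnected ⟨w, hw⟩ ⟨v, hvC⟩).map (SimpleGraph.Embedding.induce _).toHom
  exact (SimpleGraph.ConnectedComponent.sound hreach).trans hvc

lemma isConnSet_map_iff {H : SimpleGraph W} (f : H ↪g G) {A : Finset W} :
    IsConnSet G (A.map f.toEmbedding) ↔ IsConnSet H A := by
  let g : H.induce (A : Set W) ↪g G := (SimpleGraph.Embedding.induce _).trans f
  have hrange : (A.map f.toEmbedding : Set V) = Set.range g := by
    ext v; simp [g]
  rw [IsConnSet, hrange]
  exact g.isoInduceRange.connected_iff.symm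

end ConnectedSets

section ConnectedSetClass

variable {V W : Type*} [Fintype V] [DecidableEq V] [Fintype W] [DecidableEq W] {G : SimpleGraph V}

lemma mem_Ccon {A : Finset V} : A ∈ Ccon G ↔ A = ∅ ∨ IsConnSet G A := by
  simp [Ccon]

lemma mem_Ccon_of_preconnected {A : Finset V} (hA : (G.induce (A : Set V)).Preconnected) :
    A ∈ Ccon G := by
  refine mem_Ccon.2 (A.eq_empty_or_nonempty.imp_right fun hne ↦ ?_)
  have : Nonempty (A : Set V) := hne.to_subtype
  exact ⟨hA⟩

lemma map_mem_Ccon_iff {H : SimpleGraph W} (f : H ↪g G) {A : Finset W} :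
    A.map f.toEmbedding ∈ Ccon G ↔ A ∈ Ccon H := by
  rw [mem_Ccon, mem_Ccon, Finset.map_eq_empty, isConnSet_map_iff]

lemma Shatters.exists_isConnSet {S S' : Finset V} (hS : Shatters (Ccon G) S) (hS' : S' ⊆ S)
    (hne : S'.Nonempty) : ∃ C, IsConnSet G C ∧ C ∩ S = S' := by
  obtain ⟨C, hC, rfl⟩ := hS S' hS'
  have hC_ne : C ≠ ∅ := (hne.mono Finset.inter_subset_left).ne_empty
  exact ⟨C, (mem_Ccon.1 hC).resolve_left hC_ne, rfl⟩

lemma Shatters.map_embedding {H : SimpleGraph W} (f : H ↪g G) {S : Finset W}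
    (hS : Shatters (Ccon H) S) : Shatters (Ccon G) (S.map f.toEmbedding) := by
  intro S' hS'
  obtain ⟨A, hA, rfl⟩ := Finset.subset_map_iff.1 hS'
  obtain ⟨C, hC, rfl⟩ := hS A hA
  exact ⟨C.map f.toEmbedding, (map_mem_Ccon_iff f).2 hC, (Finset.map_inter _ _).symm⟩

lemma VCD_Ccon_le_of_embedding {H : SimpleGraph W} (f : H ↪g G) : VCD (Ccon H) ≤ VCD (Ccon G) :=
  VCD_le fun S hS ↦ by simpa using (hS.map_embedding f).card_le_VCD

lemma Shatters.exists_subset_supp {S : Finset V} (hS : Shatters (Ccon G) S) (hne : S.Nonempty) :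
    ∃ c : G.ConnectedComponent, (S : Set V) ⊆ c.supp := by
  obtain ⟨C, hC, hCS⟩ := hS.exists_isConnSet subset_rfl hne
  obtain ⟨u, hu⟩ := hne
  have hSC : S ⊆ C := Finset.inter_eq_right.1 hCS
  exact ⟨G.connectedComponentMk u,
    (Finset.coe_subset.2 hSC).trans (hC.subset_supp (hSC hu) rfl)⟩

lemma Shatters.subtype_supp {S : Finset V} (hS : Shatters (Ccon G) S) (c : G.ConnectedComponent)
    [Fintype c.supp] : Shatters (Ccon (G.induce c.supp)) (S.subtype (· ∈ c.supp)) := by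
  intro A hA
  rcases A.eq_empty_or_nonempty with rfl | hne
  · exact ⟨∅, mem_Ccon.2 (.inl rfl), Finset.empty_inter _⟩
  have hAS : A.map (Function.Embedding.subtype _) ⊆ S := fun v hv ↦ by
    obtain ⟨w, hw, rfl⟩ := Finset.mem_map.1 hv
    exact Finset.mem_subtype.1 (hA hw)
  obtain ⟨C, hC, hCS⟩ := hS.exists_isConnSet hAS (hne.map (f := Function.Embedding.subtype _))
  have mem_A (w : c.supp) : w ∈ A ↔ w.1 ∈ C ∧ w.1 ∈ S := by
    rw [← Finset.mem_inter, hCS]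
    exact (Finset.mem_map' (Function.Embedding.subtype _)).symm
  obtain ⟨a, ha⟩ := hne
  have hCc : (C : Set V) ⊆ c.supp := hC.subset_supp ((mem_A a).1 ha).1 a.2
  refine ⟨C.subtype (· ∈ c.supp), mem_Ccon.2 (.inr ?_), ?_⟩
  · rw [← isConnSet_map_iff (SimpleGraph.Embedding.induce c.supp)]
    convert hC
    exact Finset.subtype_map_of_mem hCc
  · ext w
    rw [mem_A, Finset.mem_inter, Finset.mem_subtype, Finset.mem_subtype]

end ConnectedSetClass

section LowerBound

variable {V : Type*} [Fintype V] [DecidableEq V]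

lemma shatters_Ccon_leaves {G T : SimpleGraph V} (hTG : T ≤ G) (hT : T.Preconnected) :
    Shatters (Ccon G) (Finset.univ.filter (IsLeaf T)) := by
  intro S' hS'
  refine ⟨(Finset.univ.filter (IsLeaf T) \ S')ᶜ, mem_Ccon_of_preconnected ?_, ?_⟩
  · refine (hT.induce_of_degree_eq_one fun v hv ↦ ?_).mono fun x y hxy ↦ hTG hxy
    have hleaf : IsLeaf T v := by
      simp only [Finset.coe_compl, Set.notMem_compl_iff, Finset.mem_coe, Finset.mem_sdiff,
        Finset.mem_filter_univ] at hv
      exact hv.1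
    exact fun x hx y hy ↦ (isLeaf_iff_existsUnique_adj.1 hleaf).unique hx hy
  · ext v
    have := @hS' v
    simp only [Finset.mem_inter, Finset.mem_compl, Finset.mem_sdiff]
    tauto

lemma ell_le_VCD_Ccon (G : SimpleGraph V) : ell G ≤ VCD (Ccon G) := by
  refine csSup_le' ?_
  rintro _ ⟨T, hTG, hT, rfl⟩
  exact (shatters_Ccon_leaves hTG hT.connected.preconnected).card_le_VCD

theorem ellGen_le_VCD_Ccon (G : SimpleGraph V) : ellGen G ≤ VCD (Ccon G) := by
  refine csSup_le' ?_
  rintro _ ⟨c, rfl⟩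
  exact (ell_le_VCD_Ccon _).trans (VCD_Ccon_le_of_embedding (SimpleGraph.Embedding.induce c.supp))

end LowerBound

section PendantTree

variable {V : Type*} {G : SimpleGraph V} {D : Set V} {parent : V → V}

/-- The subgraph of `G` that keeps all edges inside `D` and, at each vertex `v` outside `D`, only
the edge to `parent v` (if `G` has it). Its spanning trees have the vertices outside `D` as
leaves. -/
def pendantGraph (G : SimpleGraph V) (D : Set V) (parent : V → V) : SimpleGraph V where
  Adj v w := G.Adj v w ∧ (v ∈ D ∨ w = parent v) ∧ (w ∈ D ∨ v = parent w)
  symm := ⟨fun _ _ h ↦ ⟨h.1.symm, h.2.2, h.2.1⟩⟩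
  loopless := ⟨fun _ h ↦ h.1.ne rfl⟩

lemma pendantGraph_le : pendantGraph G D parent ≤ G := fun _ _ h ↦ h.1

lemma eq_parent_of_pendantGraph_adj {v w : V} (h : (pendantGraph G D parent).Adj v w)
    (hv : v ∉ D) : w = parent v :=
  h.2.1.resolve_left hv

lemma connected_pendantGraph (hD : (G.induce D).Connected)
    (hparent : ∀ v ∉ D, parent v ∈ D ∧ G.Adj v (parent v)) :
    (pendantGraph G D parent).Connected := by
  let inclusion : G.induce D →g pendantGraph G D parent :=
    ⟨Subtype.val, fun {a b} hab ↦ ⟨hab, .inl a.2, .inl b.2⟩⟩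
  obtain ⟨u⟩ := hD.nonempty
  have reachable_of_mem (v : V) (hv : v ∈ D) : (pendantGraph G D parent).Reachable v u :=
    (hD.preconnected ⟨v, hv⟩ u).map inclusion
  refine (SimpleGraph.connected_iff_exists_forall_reachable _).2 ⟨u, fun v ↦ .symm ?_⟩
  by_cases hv : v ∈ D
  · exact reachable_of_mem v hv
  · obtain ⟨hpD, hadj⟩ := hparent v hv
    have hstep : (pendantGraph G D parent).Adj v (parent v) := ⟨hadj, .inr rfl, .inl hpD⟩
    exact hstep.reachable.trans (reachable_of_mem _ hpD)

lemma exists_isTree_existsUnique_adj_of_dominating (hD : (G.induce D).Connected)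
    (hdom : ∀ v ∉ D, ∃ x ∈ D, G.Adj x v) :
    ∃ T ≤ G, T.IsTree ∧ ∀ v ∉ D, ∃! w, T.Adj v w := by
  have hparent (v : V) : ∃ p, v ∉ D → p ∈ D ∧ G.Adj v p := by
    by_cases hv : v ∈ D
    · exact ⟨v, absurd hv⟩
    · obtain ⟨x, hx, hxv⟩ := hdom v hv
      exact ⟨x, fun _ ↦ ⟨hx, hxv.symm⟩⟩
  choose parent hparent using hparent
  obtain ⟨T, hT_le, hT⟩ := (connected_pendantGraph hD hparent).exists_isTree_le
  refine ⟨T, hT_le.trans pendantGraph_le, hT, fun v hv ↦ ?_⟩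
  have : Nontrivial V := ⟨v, parent v, (hparent v hv).2.ne⟩
  obtain ⟨w, hw⟩ := hT.connected.preconnected.exists_adj_of_nontrivial v
  have eq_parent {z : V} (hz : T.Adj v z) : z = parent v :=
    eq_parent_of_pendantGraph_adj (hT_le hz) hv
  exact ⟨w, hw, fun z hz ↦ (eq_parent hz).trans (eq_parent hw).symm⟩

end PendantTree

section UpperBound

variable {V : Type*} [Fintype V] [DecidableEq V] {G : SimpleGraph V}

lemma mem_openNbrSet {D : Finset V} {v : V} :
    v ∈ openNbrSet G D ↔ v ∉ D ∧ ∃ x ∈ D, G.Adj x v := by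
  simp only [openNbrSet, closedNbrSet, closedNbr, nbrFinset, Finset.mem_sdiff, Finset.mem_biUnion,
    Finset.mem_insert, Finset.mem_filter_univ]
  grind

lemma Shatters.exists_isConnSet_erase_subset_openNbrSet {S : Finset V} {u : V}
    (hS : Shatters (Ccon G) S) (hu : u ∈ S) :
    ∃ D, IsConnSet G D ∧ S.erase u ⊆ openNbrSet G D := by
  have hsingleton : u ∈ ({u} : Finset V) ∧ IsConnSet G {u} ∧ Disjoint {u} (S.erase u) :=
    ⟨Finset.mem_singleton_self u, isConnSet_singleton u, by simp⟩
  obtain ⟨D, -, ⟨huD, hD, hDS⟩, hmax⟩ := Finite.exists_le_maximal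
    (p := fun D ↦ u ∈ D ∧ IsConnSet G D ∧ Disjoint D (S.erase u)) hsingleton
  refine ⟨D, hD, fun b hb ↦ ?_⟩
  have hbD : b ∉ D := Finset.disjoint_right.1 hDS hb
  obtain ⟨C, hC, hCS⟩ := hS.exists_isConnSet (S' := {u, b})
    (Finset.insert_subset hu (Finset.singleton_subset_iff.2 (Finset.mem_of_mem_erase hb)))
    (Finset.insert_nonempty _ _)
  have mem_C {y : V} (hy : y ∈ ({u, b} : Finset V)) : y ∈ C :=
    Finset.inter_subset_left (hCS.ge hy)
  obtain ⟨x, hxD, y, hyC, hyD, hxy⟩ :=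
    hC.exists_adj_of_mem_of_notMem (D := D) (mem_C (by simp)) huD (mem_C (by simp)) hbD
  by_cases hyS : y ∈ S.erase u
  · have hyb : y = b := by
      have : y ∈ ({u, b} : Finset V) := hCS ▸ Finset.mem_inter.2 ⟨hyC, Finset.mem_of_mem_erase hyS⟩
      simpa [Finset.ne_of_mem_erase hyS] using this
    exact hyb ▸ mem_openNbrSet.2 ⟨hyD, x, hxD, hxy⟩
  · have hinsert : insert y D ≤ D :=
      hmax ⟨Finset.mem_insert_of_mem huD, hD.insert_of_adj hxD hxy,
        Finset.disjoint_insert_left.2 ⟨hyS, hDS⟩⟩ (Finset.subset_insert y D)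
    exact absurd (hinsert (Finset.mem_insert_self y D)) hyD

lemma card_openNbrSet_le_card_openNbrSet_insert {D : Finset V} {x y : V} (hxy : G.Adj x y)
    (hyD : y ∉ D) (hyN : y ∉ openNbrSet G D) :
    (openNbrSet G D).card ≤ (openNbrSet G (insert x D)).card := by
  have hsub : insert y ((openNbrSet G D).erase x) ⊆ openNbrSet G (insert x D) := by
    have hne := hxy.ne
    intro v
    simp only [Finset.mem_insert, Finset.mem_erase, mem_openNbrSet]
    grind
  calc (openNbrSet G D).card
      ≤ ((openNbrSet G D).erase x).card + 1 :=
        Nat.sub_le_iff_le_add.1 Finset.pred_card_le_card_erase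
    _ = (insert y ((openNbrSet G D).erase x)).card :=
        (Finset.card_insert_of_notMem fun h ↦ hyN (Finset.mem_of_mem_erase h)).symm
    _ ≤ (openNbrSet G (insert x D)).card := Finset.card_le_card hsub

lemma exists_isConnSet_dominating (hG : G.Preconnected) {D₀ : Finset V} (hD₀ : IsConnSet G D₀) :
    ∃ D, IsConnSet G D ∧ (openNbrSet G D₀).card ≤ (openNbrSet G D).card ∧
      ∀ v ∉ D, v ∈ openNbrSet G D := by
  obtain ⟨D, -, ⟨hD, hcard⟩, hmax⟩ := Finite.exists_le_maximal
    (p := fun D ↦ IsConnSet G D ∧ (openNbrSet G D₀).card ≤ (openNbrSet G D).card)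
    ⟨hD₀, le_rfl⟩
  refine ⟨D, hD, hcard, fun v hvD ↦ by_contra fun hvN ↦ ?_⟩
  obtain ⟨u, hu⟩ := hD.nonempty
  obtain ⟨x, hx, y, hy, hxy⟩ := exists_adj_mem_notMem_of_preconnected hG
    (D := ↑(D ∪ openNbrSet G D)) (a := u) (b := v) (by simp_all) (by simp_all)
  simp only [Finset.coe_union, Set.mem_union, Finset.mem_coe, not_or] at hx hy
  have hxD : x ∉ D := fun hxD ↦ hy.2 (mem_openNbrSet.2 ⟨hy.1, x, hxD, hxy⟩)
  obtain ⟨-, z, hzD, hzx⟩ := mem_openNbrSet.1 (hx.resolve_left hxD)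
  have hinsert : insert x D ≤ D :=
    hmax ⟨hD.insert_of_adj hzD hzx, hcard.trans
      (card_openNbrSet_le_card_openNbrSet_insert hxy hy.1 hy.2)⟩ (Finset.subset_insert x D)
  exact hxD (hinsert (Finset.mem_insert_self x D))

lemma IsConnSet.card_openNbrSet_le_ell {D : Finset V} (hD : IsConnSet G D)
    (hdom : ∀ v ∉ D, v ∈ openNbrSet G D) : (openNbrSet G D).card ≤ ell G := by
  obtain ⟨T, hTG, hT, hleaf⟩ := exists_isTree_existsUnique_adj_of_dominating hD
    fun v hv ↦ (mem_openNbrSet.1 (hdom v hv)).2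
  have hsub : openNbrSet G D ⊆ Finset.univ.filter (IsLeaf T) := fun v hv ↦
    (Finset.mem_filter_univ v).2 (isLeaf_iff_existsUnique_adj.2 (hleaf v (mem_openNbrSet.1 hv).1))
  exact (Finset.card_le_card hsub).trans (leafCount_le_ell hTG hT)

lemma VCD_Ccon_le_ell_add_one (hG : G.Preconnected) : VCD (Ccon G) ≤ ell G + 1 := by
  refine VCD_le fun S hS ↦ ?_
  rcases S.eq_empty_or_nonempty with rfl | ⟨u, hu⟩
  · exact Nat.zero_le _
  obtain ⟨D₀, hD₀, hSD₀⟩ := hS.exists_isConnSet_erase_subset_openNbrSet hu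
  obtain ⟨D, hD, hcard, hdom⟩ := exists_isConnSet_dominating hG hD₀
  calc S.card
      = (S.erase u).card + 1 := (Finset.card_erase_add_one hu).symm
    _ ≤ (openNbrSet G D₀).card + 1 := by gcongr
    _ ≤ (openNbrSet G D).card + 1 := by gcongr
    _ ≤ ell G + 1 := by gcongr; exact hD.card_openNbrSet_le_ell hdom

theorem VCD_Ccon_le_ellGen_add_one (G : SimpleGraph V) : VCD (Ccon G) ≤ ellGen G + 1 := by
  refine VCD_le fun S hS ↦ ?_
  rcases S.eq_empty_or_nonempty with rfl | hne
  · exact Nat.zero_le _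
  obtain ⟨c, hSc⟩ := hS.exists_subset_supp hne
  calc S.card
      = (S.subtype (· ∈ c.supp)).card := by
        rw [Finset.card_subtype, Finset.filter_true_of_mem hSc]
    _ ≤ VCD (Ccon (G.induce c.supp)) := (hS.subtype_supp c).card_le_VCD
    _ ≤ ell (G.induce c.supp) + 1 :=
        VCD_Ccon_le_ell_add_one c.connected_toSimpleGraph.preconnected
    _ ≤ ellGen G + 1 := by gcongr; exact ell_induce_supp_le_ellGen c

end UpperBound

/-- For every finite simple graph `G` each of whose connected
components has at least two vertices, `ℓ(G) ≤ VCD(C_con(G)) ≤ ℓ(G) + 1`, where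
`ℓ(G)` is the maximum of `ℓ` over the connected components of `G`. -/
theorem con_vcd_bounds_general {V : Type*} [Fintype V] [DecidableEq V]
    (G : SimpleGraph V)
    (hcomp : ∀ c : G.ConnectedComponent, ∃ x y : V, x ∈ c.supp ∧ y ∈ c.supp ∧ x ≠ y) :
    ellGen G ≤ VCD (Ccon G) ∧ VCD (Ccon G) ≤ ellGen G + 1 :=
  ⟨ellGen_le_VCD_Ccon G, VCD_Ccon_le_ellGen_add_one G⟩
end

section
/- For every connected finite simple graph G with at least two vertices, RTD(C_con(G)) ≥ ℓ(G). -/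
open scoped Classical

/-!
If a nonempty class `𝒟` is contained in `𝒞`, then the first layer of the recursive teaching
sequence of `𝒞` that meets `𝒟` costs at least `TDmin 𝒟`, because up to that moment all of `𝒟`
has survived; so `TDmin 𝒟 ≤ RTD 𝒞`. For `𝒟` a cube `{C | A ⊆ C ⊆ B}`, a teaching set of a member
must contain all of `B \ A`, since flipping any point of `B \ A` leads to another member.
If `L` is the set of leaves of a spanning tree of `G`, deleting any subset of `L` leaves a
connected set, so `Ccon G` contains the cube `{C | Lᶜ ⊆ C}` of dimension `#L`.
-/

open scoped symmDiff

section Teaching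

variable {X : Type*} [DecidableEq X] {𝒞 𝒟 : Finset (Finset X)} {A B C D : Finset X} {x : X}

theorem IsTeachingSet.anti (hD : IsTeachingSet 𝒞 C D) (h : 𝒟 ⊆ 𝒞) : IsTeachingSet 𝒟 C D :=
  fun C' hC' => hD C' (h hC')

theorem exists_isTeachingSet (𝒞 : Finset (Finset X)) (C : Finset X) :
    ∃ D, IsTeachingSet 𝒞 C D := by
  refine ⟨𝒞.biUnion id ∪ C, fun C' hC' hne => ?_⟩
  by_contra! hagree
  refine hne (Finset.ext fun x => ⟨fun hx => ?_, fun hx => ?_⟩)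
  · exact (hagree x (Finset.mem_union_left _ (Finset.mem_biUnion.2 ⟨C', hC', hx⟩))).1 hx
  · exact (hagree x (Finset.mem_union_right _ hx)).2 hx

theorem exists_isTeachingSet_card_eq_TD (𝒞 : Finset (Finset X)) (C : Finset X) :
    ∃ D, IsTeachingSet 𝒞 C D ∧ D.card = TD 𝒞 C :=
  have ⟨D, hD⟩ := exists_isTeachingSet 𝒞 C
  Nat.sInf_mem (s := {n | ∃ D, IsTeachingSet 𝒞 C D ∧ D.card = n}) ⟨D.card, D, hD, rfl⟩

theorem IsTeachingSet.TD_le_card (hD : IsTeachingSet 𝒞 C D) : TD 𝒞 C ≤ D.card :=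
  Nat.sInf_le ⟨D, hD, rfl⟩

theorem TD_mono (h : 𝒟 ⊆ 𝒞) (C : Finset X) : TD 𝒟 C ≤ TD 𝒞 C := by
  obtain ⟨D, hD, hcard⟩ := exists_isTeachingSet_card_eq_TD 𝒞 C
  exact hcard ▸ (hD.anti h).TD_le_card

theorem TDmin_le_TD (hC : C ∈ 𝒞) : TDmin 𝒞 ≤ TD 𝒞 C :=
  Nat.sInf_le ⟨C, hC, rfl⟩

theorem exists_mem_TD_eq_TDmin (h : 𝒞.Nonempty) : ∃ C ∈ 𝒞, TD 𝒞 C = TDmin 𝒞 :=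
  have ⟨C, hC⟩ := h
  Nat.sInf_mem (s := {n | ∃ C ∈ 𝒞, TD 𝒞 C = n}) ⟨TD 𝒞 C, C, hC, rfl⟩

/-- The first layer `𝒞_min` of the recursive teaching sequence of `𝒞`: the concepts of minimum
teaching dimension, which the recursion defining `RTD 𝒞` removes. -/
noncomputable def teachingLayer (𝒞 : Finset (Finset X)) : Finset (Finset X) :=
  𝒞.filter (fun C => TD 𝒞 C = TDmin 𝒞)

theorem teachingLayer_nonempty (h : 𝒞.Nonempty) : (teachingLayer 𝒞).Nonempty :=
  have ⟨C, hC, hTD⟩ := exists_mem_TD_eq_TDmin h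
  ⟨C, Finset.mem_filter.2 ⟨hC, hTD⟩⟩

theorem sdiff_teachingLayer_ssubset (h : 𝒞.Nonempty) : 𝒞 \ teachingLayer 𝒞 ⊂ 𝒞 :=
  Finset.sdiff_ssubset (Finset.filter_subset _ _) (teachingLayer_nonempty h)

theorem TDmin_le_RTD (𝒞 : Finset (Finset X)) : TDmin 𝒞 ≤ RTD 𝒞 := by
  rw [RTD]
  split_ifs
  exacts [le_rfl, le_max_left _ _]

theorem RTD_sdiff_teachingLayer_le (h : (𝒞 \ teachingLayer 𝒞).Nonempty) :
    RTD (𝒞 \ teachingLayer 𝒞) ≤ RTD 𝒞 := by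
  have hne : 𝒞 ≠ teachingLayer 𝒞 := fun heq => Finset.sdiff_nonempty.1 h heq.le
  have hRTD : RTD 𝒞 = max (TDmin 𝒞) (RTD (𝒞 \ teachingLayer 𝒞)) := by
    rw [RTD]
    exact dif_neg hne
  exact hRTD ▸ le_max_right _ _

theorem TDmin_le_RTD_of_subset (hne : 𝒟.Nonempty) (h : 𝒟 ⊆ 𝒞) : TDmin 𝒟 ≤ RTD 𝒞 := by
  induction 𝒞 using Finset.strongInduction with
  | H 𝒞 ih =>
    by_cases hdisj : Disjoint 𝒟 (teachingLayer 𝒞)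
    · have hsub : 𝒟 ⊆ 𝒞 \ teachingLayer 𝒞 := Finset.subset_sdiff.2 ⟨h, hdisj⟩
      calc TDmin 𝒟 ≤ RTD (𝒞 \ teachingLayer 𝒞) :=
            ih _ (sdiff_teachingLayer_ssubset (hne.mono h)) hsub
        _ ≤ RTD 𝒞 := RTD_sdiff_teachingLayer_le (hne.mono hsub)
    · obtain ⟨C, hC𝒟, hClayer⟩ := Finset.not_disjoint_iff.1 hdisj
      calc TDmin 𝒟 ≤ TD 𝒟 C := TDmin_le_TD hC𝒟
        _ ≤ TD 𝒞 C := TD_mono h C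
        _ = TDmin 𝒞 := (Finset.mem_filter.1 hClayer).2
        _ ≤ RTD 𝒞 := TDmin_le_RTD 𝒞

theorem IsTeachingSet.mem_of_symmDiff_singleton_mem (hD : IsTeachingSet 𝒞 C D)
    (hx : C ∆ {x} ∈ 𝒞) : x ∈ D := by
  have hne : C ∆ {x} ≠ C := by simp [symmDiff_eq_left]
  obtain ⟨y, hyD, hy⟩ := hD _ hx hne
  obtain rfl : y = x := by
    by_contra hyx
    simp [Finset.mem_symmDiff, hyx] at hy
  exact hyD

theorem symmDiff_singleton_mem_Icc (hC : C ∈ Finset.Icc A B) (hx : x ∈ B \ A) :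
    C ∆ {x} ∈ Finset.Icc A B := by
  obtain ⟨hAC, hCB⟩ := Finset.mem_Icc.1 hC
  obtain ⟨hxB, hxA⟩ := Finset.mem_sdiff.1 hx
  refine Finset.mem_Icc.2 ⟨fun y hy => ?_, fun y hy => ?_⟩
  · exact Finset.mem_symmDiff.2 (.inl ⟨hAC hy, fun hyx => hxA (Finset.mem_singleton.1 hyx ▸ hy)⟩)
  · rcases Finset.mem_symmDiff.1 hy with ⟨hyC, -⟩ | ⟨hyx, -⟩
    · exact hCB hyC
    · exact Finset.mem_singleton.1 hyx ▸ hxB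

theorem card_sdiff_le_TD_Icc (hC : C ∈ Finset.Icc A B) :
    (B \ A).card ≤ TD (Finset.Icc A B) C := by
  obtain ⟨D, hD, hcard⟩ := exists_isTeachingSet_card_eq_TD (Finset.Icc A B) C
  rw [← hcard]
  exact Finset.card_le_card fun x hx =>
    hD.mem_of_symmDiff_singleton_mem (symmDiff_singleton_mem_Icc hC hx)

theorem card_sdiff_le_RTD_of_Icc_subset (hAB : A ⊆ B) (h : Finset.Icc A B ⊆ 𝒞) :
    (B \ A).card ≤ RTD 𝒞 := by
  have hne : (Finset.Icc A B).Nonempty := Finset.nonempty_Icc.2 hAB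
  obtain ⟨C, hC, hTD⟩ := exists_mem_TD_eq_TDmin hne
  calc (B \ A).card ≤ TD (Finset.Icc A B) C := card_sdiff_le_TD_Icc hC
    _ = TDmin (Finset.Icc A B) := hTD
    _ ≤ RTD 𝒞 := TDmin_le_RTD_of_subset hne h

end Teaching

section Leaves

variable {V : Type*} [Fintype V] {G T : SimpleGraph V}

theorem IsLeaf.subsingleton_neighborSet {v : V} (hv : IsLeaf T v) :
    (T.neighborSet v).Subsingleton := by
  obtain ⟨w, hw⟩ := Finset.card_eq_one.1 hv
  have hnbr : T.neighborSet v = {w} := by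
    ext u
    simpa using Finset.ext_iff.1 hw u
  exact hnbr ▸ Set.subsingleton_singleton

theorem isConnSet_of_forall_notMem_isLeaf (hTG : T ≤ G) (hT : T.Preconnected) {C : Finset V}
    (hne : C.Nonempty) (hC : ∀ v ∉ C, IsLeaf T v) : IsConnSet G C := by
  have hTC : (T.induce (C : Set V)).Preconnected :=
    hT.induce_of_degree_eq_one fun v hv => (hC v hv).subsingleton_neighborSet
  have : Nonempty (C : Set V) := hne.to_subtype
  exact ⟨hTC.mono (SimpleGraph.comap_monotone _ hTG)⟩

variable [DecidableEq V]

theorem leafCount_le_RTD_Ccon (hTG : T ≤ G) (hT : T.Preconnected) :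
    leafCount T ≤ RTD (Ccon G) := by
  set L : Finset V := Finset.univ.filter (IsLeaf T)
  have hcube : Finset.Icc Lᶜ Finset.univ ⊆ Ccon G := fun C hC => by
    refine Finset.mem_filter.2 ⟨Finset.mem_univ C, C.eq_empty_or_nonempty.imp_right fun hne => ?_⟩
    refine isConnSet_of_forall_notMem_isLeaf hTG hT hne fun v hv => ?_
    have hvL : v ∉ Lᶜ := fun hvL => hv ((Finset.mem_Icc.1 hC).1 hvL)
    simpa [L] using hvL
  calc leafCount T = (Finset.univ \ Lᶜ).card := by
        rw [← Finset.compl_eq_univ_sdiff, compl_compl]; rfl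
    _ ≤ RTD (Ccon G) := card_sdiff_le_RTD_of_Icc_subset (Finset.subset_univ _) hcube

end Leaves

/-- For every connected finite simple graph `G` with at least two
vertices, `RTD(C_con(G)) ≥ ℓ(G)`. -/
theorem con_rtd_lower {V : Type*} [Fintype V] [DecidableEq V]
    (G : SimpleGraph V) (hconn : G.Connected) (hcard : 2 ≤ Fintype.card V) :
    ell G ≤ RTD (Ccon G) := by
  obtain ⟨T₀, hT₀G, hT₀⟩ := hconn.exists_isTree_le
  refine csSup_le ⟨leafCount T₀, T₀, hT₀G, hT₀, rfl⟩ ?_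
  rintro _ ⟨T, hTG, hT, rfl⟩
  exact leafCount_le_RTD_Ccon hTG hT.connected.preconnected
end
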